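/- arXiv:1210.8303 — 2 statements merged into one kernel-verified Lean document; each statement's English description precedes it below -/
import Mathlib

section
/- Suppose the flow graph G is reducible. Let T be a rooted tree on the vertex set of G that has the parent property, and let G' be the derived graph of G with respect to T. If for every vertex v ≠ s, either (t(v), v) ∈ A or at least two distinct arcs of G' enter v, then T has the sibling property (and hence T is the dominator tree of G). -/
variable {V : Type*}

/-- `IsWalk A u v p`: `p` is a path from `u` to `v` in the digraph with arc
relation `A`, listing all of its vertices in order. -/
def IsWalk (A : V → V → Prop) (u v : V) (p : List V) : Prop :=
  p.Chain' A ∧ p.head? = some u ∧ p.getLast? = some v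

/-- A flow graph: a directed graph with arc relation `A` and start vertex `s`
such that every vertex is reachable from `s` and no arc enters `s`. -/
structure FlowGraph (V : Type*) where
  A : V → V → Prop
  s : V
  reach : ∀ v : V, ∃ p : List V, IsWalk A s v p
  no_enter : ∀ v : V, ¬ A v s

/-- `DomOn A s v w`: `v` lies on every path from `s` to `w` in the digraph with
arc relation `A`. -/
def DomOn (A : V → V → Prop) (s v w : V) : Prop :=
  ∀ p : List V, IsWalk A s w p → v ∈ p

/-- `v` dominates `w` in the flow graph `G`. -/
def FlowGraph.Dom (G : FlowGraph V) (v w : V) : Prop :=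
  DomOn G.A G.s v w

/-- A rooted tree on vertex set `V`, given by a parent function: the root is a
fixed point of the parent function, and iterating the parent function from any
vertex eventually reaches the root. -/
structure ParentTree (V : Type*) where
  parent : V → V
  root : V
  parent_root : parent root = root
  reaches_root : ∀ v : V, ∃ n : ℕ, parent^[n] v = root

/-- `T.Anc x y`: `x` is an ancestor of `y` in the rooted tree `T` (every vertex
is an ancestor of itself). -/
def ParentTree.Anc (T : ParentTree V) (x y : V) : Prop :=
  ∃ n : ℕ, T.parent^[n] y = x

/-- `T` has the parent property with respect to `G`: for every arc `(v, w)`,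
the parent of `w` is an ancestor of `v` in `T`. -/
def ParentProperty (G : FlowGraph V) (T : ParentTree V) : Prop :=
  ∀ v w : V, G.A v w → T.Anc (T.parent w) v

/-- The sibling property with respect to an arbitrary arc relation `A` with
start vertex `s`: no non-root vertex dominates a distinct vertex with the same
parent. -/
def SiblingPropertyOn (A : V → V → Prop) (s : V) (T : ParentTree V) : Prop :=
  ∀ v w : V, v ≠ T.root → w ≠ T.root → v ≠ w → T.parent v = T.parent w →
    ¬ DomOn A s v w

/-- `T` has the sibling property with respect to the flow graph `G`. -/
def SiblingProperty (G : FlowGraph V) (T : ParentTree V) : Prop :=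
  SiblingPropertyOn G.A G.s T

/-- `T` is the dominator tree of the digraph with arc relation `A` and start
vertex `s`: `T` is rooted at `s`, and the parent of every vertex `v ≠ s` is its
immediate dominator, i.e. a strict dominator of `v` that is dominated by every
strict dominator of `v`. -/
def IsDomTreeOn (A : V → V → Prop) (s : V) (T : ParentTree V) : Prop :=
  T.root = s ∧ ∀ v : V, v ≠ s →
    DomOn A s (T.parent v) v ∧ T.parent v ≠ v ∧
    ∀ u : V, DomOn A s u v → u ≠ v → DomOn A s u (T.parent v)

/-- `T` is the dominator tree of the flow graph `G`. -/
def IsDomTree (G : FlowGraph V) (T : ParentTree V) : Prop :=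
  IsDomTreeOn G.A G.s T

/-- `ord` is (the numbering of) a preorder of the rooted tree `T`: an injective
numbering of the vertices such that for every vertex `v` the descendants of `v`
are ordered consecutively, with `v` first. -/
def IsTreePreorder (T : ParentTree V) (ord : V → ℕ) : Prop :=
  Function.Injective ord ∧
  (∀ v x : V, T.Anc v x → ord v ≤ ord x) ∧
  (∀ v x y z : V, T.Anc v x → T.Anc v z → ord x ≤ ord y → ord y ≤ ord z →
    T.Anc v y)

/-- A preorder `ord` of `T` is low-high on the digraph with arc relation `A`
and start vertex `s`: for every `v ≠ s`, either `(t(v), v)` is an arc, or there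
are arcs `(u, v)` and `(w, v)` with `u < v < w` in the order and `w` not a
descendant of `v` in `T`. -/
def LowHighOn (A : V → V → Prop) (s : V) (T : ParentTree V) (ord : V → ℕ) :
    Prop :=
  IsTreePreorder T ord ∧
  ∀ v : V, v ≠ s → (A (T.parent v) v ∨
    ∃ u w : V, A u v ∧ A w v ∧ ord u < ord v ∧ ord v < ord w ∧ ¬ T.Anc v w)

/-- A low-high order of `T` on the flow graph `G`. -/
def LowHigh (G : FlowGraph V) (T : ParentTree V) (ord : V → ℕ) : Prop :=
  LowHighOn G.A G.s T ord

/-- `B` is (the arc relation of) a spanning tree of `G` rooted at `s`: a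
subgraph of `G` in which no arc enters `s`, every vertex other than `s` has
exactly one entering arc, and every vertex is reachable from `s`. -/
def IsSpanningTree (G : FlowGraph V) (B : V → V → Prop) : Prop :=
  (∀ u v : V, B u v → G.A u v) ∧
  (∀ v : V, ¬ B v G.s) ∧
  (∀ v : V, v ≠ G.s → ∃! u : V, B u v) ∧
  (∀ v : V, ∃ p : List V, IsWalk B G.s v p)

/-- Spanning trees `B` and `R` of `G` rooted at `s` are independent: for every
vertex `v`, the paths from `s` to `v` in `B` and in `R` have in common only
dominators of `v`. -/
def Independent (G : FlowGraph V) (B R : V → V → Prop) : Prop :=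
  ∀ v : V, ∀ p q : List V, IsWalk B G.s v p → IsWalk R G.s v q →
    ∀ x : V, x ∈ p → x ∈ q → G.Dom x v

/-- Spanning trees `B` and `R` of `G` rooted at `s` are strongly independent:
for every pair of vertices `v`, `w`, either the path from `s` to `v` in `B` and
the path from `s` to `w` in `R` have in common only common dominators of `v`
and `w`, or the same holds with the roles of `B` and `R` exchanged. -/
def StronglyIndependent (G : FlowGraph V) (B R : V → V → Prop) : Prop :=
  ∀ v w : V,
    (∀ p q : List V, IsWalk B G.s v p → IsWalk R G.s w q →
      ∀ x : V, x ∈ p → x ∈ q → G.Dom x v ∧ G.Dom x w) ∨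
    (∀ p q : List V, IsWalk R G.s v p → IsWalk B G.s w q →
      ∀ x : V, x ∈ p → x ∈ q → G.Dom x v ∧ G.Dom x w)

/-- `IsDerivedArcOf G T v b a`: `(a, b)` is the derived arc of the arc `(v, b)`
of `G` with respect to `T`: `b` is not an ancestor of `v` in `T`, and `a = v`
if `v` is the parent of `b`, while otherwise `a` is the sibling of `b` in `T`
that is an ancestor of `v`. -/
def IsDerivedArcOf (G : FlowGraph V) (T : ParentTree V) (v b a : V) : Prop :=
  G.A v b ∧ ¬ T.Anc b v ∧
    ((v = T.parent b ∧ a = v) ∨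
     (v ≠ T.parent b ∧ a ≠ T.root ∧ T.parent a = T.parent b ∧ T.Anc a v))

/-- The arc relation of the derived graph of `G` with respect to `T`. -/
def DerivedArc (G : FlowGraph V) (T : ParentTree V) (a b : V) : Prop :=
  ∃ v : V, IsDerivedArcOf G T v b a

/-- `S` is the vertex set of a strongly connected subgraph of the digraph with
arc relation `A`. -/
def StronglyConnectedSet (A : V → V → Prop) (S : Set V) : Prop :=
  S.Nonempty ∧ ∀ u ∈ S, ∀ v ∈ S, ∃ p : List V,
    IsWalk A u v p ∧ ∀ x ∈ p, x ∈ S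

/-- `G` is reducible: every strongly connected subgraph has a single entry
vertex, i.e. a vertex of the subgraph contained in every path from `s` to a
vertex of the subgraph. -/
def Reducible (G : FlowGraph V) : Prop :=
  ∀ S : Set V, StronglyConnectedSet G.A S →
    ∃ v ∈ S, ∀ u ∈ S, ∀ p : List V, IsWalk G.A G.s u p → v ∈ p

/-- A digraph is acyclic if it has no cycle (a path from a vertex to itself
with at least one arc). -/
def Acyclic (A : V → V → Prop) : Prop :=
  ¬ ∃ (v : V) (p : List V), IsWalk A v v p ∧ 2 ≤ p.length

/-- `IsHighWalk A ν u v p`: `p` is a high path from `u` to `v`: a path all of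
whose vertices other than `u` and `v` are greater (in the numbering `ν`) than
both `u` and `v`. -/
def IsHighWalk (A : V → V → Prop) (ν : V → ℕ) (u v : V) (p : List V) : Prop :=
  IsWalk A u v p ∧ ∀ x ∈ p, x ≠ u → x ≠ v → ν u < ν x ∧ ν v < ν x

/-- Reachability from `u` along vertices satisfying `P`. -/
inductive RR (A : V → V → Prop) (P : V → Prop) (u : V) : V → Prop
  | refl : P u → RR A P u u
  | tail {a b : V} : RR A P u a → A a b → P b → RR A P u b

theorem RR.last {A : V → V → Prop} {P : V → Prop} {u v : V} (h : RR A P u v) : P v := by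
  cases h <;> assumption

theorem RR.mono {A : V → V → Prop} {P Q : V → Prop} {u v : V} (hPQ : ∀ x, P x → Q x)
    (h : RR A P u v) : RR A Q u v := by
  induction h with
  | refl h => exact .refl (hPQ _ h)
  | tail _ h1 h2 ih => exact .tail ih h1 (hPQ _ h2)

theorem RR.trans {A : V → V → Prop} {P : V → Prop} {u v w : V}
    (h : RR A P u v) (h' : RR A P v w) : RR A P u w := by
  induction h' with
  | refl _ => exact h
  | tail _ h1 h2 ih => exact .tail ih h1 h2

theorem RR.walk {A : V → V → Prop} {P : V → Prop} {u v : V}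
    (h : RR A P u v) : ∃ p, IsWalk A u v p ∧ ∀ x ∈ p, P x := by
  induction h with
  | refl h => exact ⟨[u], ⟨List.isChain_singleton u, rfl, rfl⟩, by simpa using h⟩
  | @tail a b _ h1 h2 ih =>
    obtain ⟨p, ⟨hc, hh, hl⟩, hp⟩ := ih
    refine ⟨p ++ [b], ⟨?_, ?_, ?_⟩, ?_⟩
    · refine List.isChain_append.2 ⟨hc, by simp, ?_⟩
      intro x hx y hy
      simp at hy
      subst hy
      rw [hl] at hx
      simp at hx
      subst hx
      exact h1
    · simp [hh]
    · simp
    · intro x hx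
      simp at hx
      rcases hx with hx | rfl
      · exact hp _ hx
      · exact h2

theorem walk_RR {A : V → V → Prop} {P : V → Prop} {u : V} (p : List V) :
    ∀ v, IsWalk A u v p → (∀ x ∈ p, P x) → RR A P u v := by
  induction p using List.reverseRecOn with
  | nil => intro v h; simp [IsWalk] at h
  | append_singleton q b ih =>
    rintro v ⟨hc, hh, hl⟩ hp
    simp at hl
    subst hl
    rcases List.eq_nil_or_concat q with rfl | ⟨q', a, rfl⟩
    · simp at hh
      subst hh
      exact .refl (hp _ (by simp))
    · obtain ⟨hc1, _, hc2⟩ := List.isChain_append.1 hc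
      refine .tail (a := a) (ih a ⟨hc1, ?_, by simp⟩ ?_) (hc2 a (by simp) b (by simp))
        (hp _ (by simp))
      · rw [← hh]; cases q' <;> simp
      · intro x hx; exact hp x (by simp at hx ⊢; tauto)

theorem dom_iff {A : V → V → Prop} {s v w : V} :
    DomOn A s v w ↔ ¬ RR A (fun x => x ≠ v) s w := by
  constructor
  · intro h hr
    obtain ⟨p, hp, hn⟩ := hr.walk
    exact hn v (h p hp) rfl
  · intro h p hp
    by_contra hv
    exact h (walk_RR p w hp (fun x hx e => hv (e ▸ hx)))

theorem dom_trans {A : V → V → Prop} {s v w x : V} (h1 : DomOn A s v w)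
    (h2 : DomOn A s w x) : DomOn A s v x := by
  rw [dom_iff] at *
  intro h
  have key : ∀ y, RR A (fun x => x ≠ v) s y →
      RR A (fun x => x ≠ w) s y ∨ RR A (fun x => x ≠ v) s w := by
    intro y hy
    induction hy with
    | refl h =>
      by_cases e : s = w
      · right; rw [← e]; exact .refl h
      · left; exact .refl e
    | @tail a b h3 h4 h5 ih =>
      rcases ih with ih | ih
      · by_cases e : b = w
        · right; rw [← e]; exact .tail h3 h4 h5
        · left; exact .tail ih h4 e
      · exact .inr ih
  exact (key x h).elim h2 h1

theorem dom_antisymm {A : V → V → Prop} {s v w : V} (hr : RR A (fun _ => True) s v)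
    (h1 : DomOn A s v w) (h2 : DomOn A s w v) : v = w := by
  rw [dom_iff] at *
  by_contra hne
  have key : ∀ y, RR A (fun _ => True) s y →
      RR A (fun x => x ≠ v ∧ x ≠ w) s y ∨ RR A (fun x => x ≠ v) s w ∨
        RR A (fun x => x ≠ w) s v := by
    intro y hy
    induction hy with
    | refl h =>
      by_cases e : s = w
      · right; left; rw [← e]; exact .refl (by rw [e]; exact Ne.symm hne)
      · by_cases e' : s = v
        · right; right; rw [← e']; exact .refl e
        · left; exact .refl ⟨e', e⟩
    | @tail a b h3 h4 h5 ih =>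
      rcases ih with ih | ih
      · by_cases e : b = w
        · right; left
          subst e
          exact .tail (ih.mono fun _ h => h.1) h4 (Ne.symm hne)
        · by_cases e' : b = v
          · right; right
            subst e'
            exact .tail (ih.mono fun _ h => h.2) h4 hne
          · left; exact .tail ih h4 ⟨e', e⟩
      · exact .inr ih
  rcases key v hr with h | h | h
  · exact h.last.1 rfl
  · exact h1 h
  · exact h2 h

theorem dom_pred {A : V → V → Prop} {s v w x : V} (h : DomOn A s v w) (hne : w ≠ v)
    (ha : A x w) : DomOn A s v x := by
  rw [dom_iff] at *
  exact fun hr => h (.tail hr ha hne)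

theorem reachT (G : FlowGraph V) (v : V) : RR G.A (fun _ => True) G.s v := by
  obtain ⟨p, hp⟩ := G.reach v
  exact walk_RR p v hp (fun _ _ => trivial)

theorem ParentTree.Anc.refl (T : ParentTree V) (x : V) : T.Anc x x := ⟨0, rfl⟩

theorem ParentTree.Anc.trans {T : ParentTree V} {x y z : V} (h : T.Anc x y) (h' : T.Anc y z) :
    T.Anc x z := by
  obtain ⟨n, hn⟩ := h
  obtain ⟨m, hm⟩ := h'
  exact ⟨n + m, by rw [Function.iterate_add_apply, hm, hn]⟩

theorem anc_parent (T : ParentTree V) (x : V) : T.Anc (T.parent x) x := ⟨1, rfl⟩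

theorem anc_cases {T : ParentTree V} {x y : V} (h : T.Anc x y) : x = y ∨ T.Anc x (T.parent y) := by
  obtain ⟨n, hn⟩ := h
  cases n with
  | zero => exact .inl hn.symm
  | succ n => exact .inr ⟨n, hn⟩

theorem anc_root {T : ParentTree V} {x : V} (h : T.Anc x T.root) : x = T.root := by
  obtain ⟨n, hn⟩ := h
  rw [← hn]
  exact Function.iterate_fixed T.parent_root n

theorem fix_root {T : ParentTree V} {x : V} (h : T.parent x = x) : x = T.root := by
  obtain ⟨n, hn⟩ := T.reaches_root x
  rw [← hn, Function.iterate_fixed h n]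

theorem anc_dom {G : FlowGraph V} {T : ParentTree V} (hroot : T.root = G.s)
    (hpp : ParentProperty G T) {x y : V} (h : T.Anc x y) : DomOn G.A G.s x y := by
  rw [dom_iff]
  intro hr
  induction hr with
  | refl hs => exact hs (by rw [← hroot] at *; exact (anc_root h).symm)
  | @tail a b h1 h2 h3 ih =>
    rcases anc_cases h with e | e
    · exact h3 e.symm
    · exact ih (e.trans (hpp _ _ h2))

theorem anc_reach {G : FlowGraph V} {T : ParentTree V} (hroot : T.root = G.s)
    (hpp : ParentProperty G T) {d x : V} (h : T.Anc d x) : RR G.A (T.Anc d) d x := by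
  have hr := reachT G x
  induction hr with
  | refl _ =>
    have : d = G.s := by rw [← hroot] at *; exact anc_root h
    subst this
    exact .refl (.refl T _)
  | @tail a b h1 h2 h3 ih =>
    rcases anc_cases h with e | e
    · subst e
      exact .refl (.refl T _)
    · exact .tail (ih (e.trans (hpp _ _ h2))) h2 h

theorem dom_up {G : FlowGraph V} {T : ParentTree V} (hroot : T.root = G.s)
    (hpp : ParentProperty G T) {v d x : V} (h : T.Anc d x) (hn : ¬ T.Anc d v)
    (hd : DomOn G.A G.s v x) : DomOn G.A G.s v d := by
  rw [dom_iff] at *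
  intro hr
  exact hd (hr.trans ((anc_reach hroot hpp h).mono fun y hy e => hn (e ▸ hy)))

theorem sib_anc {G : FlowGraph V} {T : ParentTree V} (hroot : T.root = G.s)
    (hpp : ParentProperty G T) {a v : V} (ha : a ≠ T.root) (ht : T.parent a = T.parent v)
    (h : T.Anc a v) : a = v := by
  rcases anc_cases h with e | e
  · exact e
  · rw [← ht] at e
    exact absurd (fix_root (dom_antisymm (reachT G _) (anc_dom hroot hpp e)
      (anc_dom hroot hpp (anc_parent T a))).symm) ha

theorem sib_domtree {G : FlowGraph V} {T : ParentTree V} (hroot : T.root = G.s)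
    (hpp : ParentProperty G T) (hs : SiblingProperty G T) : IsDomTree G T := by
  classical
  refine ⟨hroot, fun v hv => ⟨anc_dom hroot hpp (anc_parent T v),
    fun e => hv (hroot ▸ fix_root e), fun u hu hne => ?_⟩⟩
  by_cases hau : T.Anc u v
  · rcases anc_cases hau with e | e
    · exact absurd e hne
    · exact anc_dom hroot hpp e
  exfalso
  have hrv : ∀ y, T.Anc T.root y := T.reaches_root
  have hex : ∃ n, T.Anc (T.parent^[n] u) v := by
    obtain ⟨n, hn⟩ := T.reaches_root u
    exact ⟨n, by rw [hn]; exact hrv v⟩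
  obtain ⟨n, hn⟩ : ∃ n, Nat.find hex = n := ⟨_, rfl⟩
  have hn1 := Nat.find_spec hex
  have hn2 := fun m => Nat.find_min (m := m) hex
  rw [hn] at hn1 hn2
  cases n with
  | zero => exact hau hn1
  | succ n =>
  have hu' := hn2 n (by omega)
  have hcu : T.Anc (T.parent^[n] u) u := ⟨n, rfl⟩
  rw [Function.iterate_succ_apply'] at hn1
  obtain ⟨u1, hu1⟩ : ∃ u1, T.parent^[n] u = u1 := ⟨_, rfl⟩
  rw [hu1] at hu' hcu hn1
  have hex2 : ∃ m, T.parent^[m] v = T.parent u1 := hn1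
  obtain ⟨m, hm⟩ : ∃ m, Nat.find hex2 = m := ⟨_, rfl⟩
  have hm1 := Nat.find_spec hex2
  have hm2 := fun k => Nat.find_min (m := k) hex2
  rw [hm] at hm1 hm2
  cases m with
  | zero =>
    have : T.Anc v u := by
      have hvv : v = T.parent u1 := hm1
      rw [hvv]
      exact (anc_parent T u1).trans hcu
    exact hne (dom_antisymm (reachT G _) hu (anc_dom hroot hpp this))
  | succ m =>
  have hv1 := hm2 m (by omega)
  have hcv : T.Anc (T.parent^[m] v) v := ⟨m, rfl⟩
  rw [Function.iterate_succ_apply'] at hm1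
  obtain ⟨v1, hv1'⟩ : ∃ v1, T.parent^[m] v = v1 := ⟨_, rfl⟩
  rw [hv1'] at hv1 hcv hm1
  have hur : u1 ≠ T.root := fun e => hu' (e ▸ hrv v)
  have hvr : v1 ≠ T.root := by
    intro e
    rw [e, T.parent_root] at hm1
    exact hv1 (e.trans hm1)
  have hne1 : u1 ≠ v1 := fun e => hu' (e ▸ hcv)
  refine hs u1 v1 hur hvr hne1 hm1.symm ?_
  exact dom_up hroot hpp hcv (fun e => hne1 (sib_anc hroot hpp hvr hm1 e).symm)
    (dom_trans (anc_dom hroot hpp hcu) hu)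

theorem sib_prop [Finite V] {G : FlowGraph V} {T : ParentTree V} (hred : Reducible G)
    (hroot : T.root = G.s) (hpp : ParentProperty G T)
    (h : ∀ v : V, v ≠ G.s → G.A (T.parent v) v ∨
      ∃ a₁ a₂ : V, a₁ ≠ a₂ ∧ DerivedArc G T a₁ v ∧ DerivedArc G T a₂ v) :
    SiblingProperty G T := by
  classical
  intro v0 w0 hv0 hw0 hne0 ht0 hd0
  let r : V → V → Prop := fun a b => DomOn G.A G.s b a ∧ a ≠ b
  haveI : Std.Irrefl r := ⟨fun a ha => ha.2 rfl⟩
  haveI : IsTrans V r := ⟨fun a b c hab hbc => ⟨dom_trans hbc.1 hab.1, fun e => by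
    subst e
    exact hab.2 (dom_antisymm (reachT G _) hbc.1 hab.1)⟩⟩
  have hwf : WellFounded r := Finite.wellFounded_of_trans_of_irrefl r
  obtain ⟨v, ⟨hvr, w1, hw1r, hw1v, hw1t, hw1d⟩, hmin⟩ := hwf.has_min
    {v | v ≠ T.root ∧ ∃ w, w ≠ T.root ∧ v ≠ w ∧ T.parent v = T.parent w ∧ DomOn G.A G.s v w}
    ⟨v0, hv0, w0, hw0, hne0, ht0, hd0⟩
  let D : Set V := {w | w ≠ T.root ∧ w ≠ v ∧ T.parent w = T.parent v ∧ DomOn G.A G.s v w}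
  have hDD : ∀ d ∈ D, ∀ b ∈ D, d ≠ b → ¬ DomOn G.A G.s d b := by
    intro d hd b hb hdb hdom
    exact hmin d ⟨hd.1, b, hb.1, hdb, hd.2.2.1.trans hb.2.2.1.symm, hdom⟩ ⟨hd.2.2.2, hd.2.1⟩
  have hnp : ¬ DomOn G.A G.s v (T.parent v) := fun hd =>
    hvr (fix_root (dom_antisymm (reachT G _) hd (anc_dom hroot hpp (anc_parent T v))).symm)
  have hpred : ∀ w : V, ∃ a, w ∈ D → (a ∈ D ∧ a ≠ w ∧ ∃ x, G.A x w ∧ T.Anc a x) := by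
    intro w
    by_cases hw : w ∈ D
    swap
    · exact ⟨w, fun e => absurd e hw⟩
    obtain ⟨hwr, hwv, hwt, hwd⟩ := hw
    have hstep : ∀ a, a ≠ v → DerivedArc G T a w →
        (a ∈ D ∧ a ≠ w ∧ ∃ x, G.A x w ∧ T.Anc a x) := by
      rintro a hav ⟨x, hA, hnx, hx⟩
      have hvx := dom_pred hwd hwv hA
      rcases hx with ⟨hx, _⟩ | ⟨_, har, hat, hax⟩
      · rw [hx, hwt] at hvx
        exact absurd hvx hnp
      · refine ⟨⟨har, hav, hat.trans hwt, ?_⟩, fun e => hnx (e ▸ hax), x, hA, hax⟩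
        exact dom_up hroot hpp hax (fun e => hav (sib_anc hroot hpp har (hat.trans hwt) e)) hvx
    rcases h w (hroot ▸ hwr) with hA | ⟨a1, a2, hne, h1, h2⟩
    · have := dom_pred hwd hwv hA
      rw [hwt] at this
      exact absurd this hnp
    · by_cases e : a1 = v
      · exact ⟨a2, fun _ => hstep a2 (fun e' => hne (e.trans e'.symm)) h2⟩
      · exact ⟨a1, fun _ => hstep a1 e h1⟩
  choose f hf using hpred
  have hw1D : w1 ∈ D := ⟨hw1r, hw1v.symm, hw1t.symm, hw1d⟩
  have hit : ∀ w ∈ D, ∀ n, f^[n] w ∈ D := by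
    intro w hw n
    induction n with
    | zero => exact hw
    | succ n ih => rw [Function.iterate_succ_apply']; exact (hf _ ih).1
  obtain ⟨w, hw, k, hk⟩ : ∃ w ∈ D, ∃ k, f^[k+1] w = w := by
    obtain ⟨i, j, hij, he⟩ := Finite.exists_ne_map_eq_of_infinite (fun n : ℕ => f^[n] w1)
    have aux : ∀ i j : ℕ, i < j → f^[i] w1 = f^[j] w1 → ∃ w ∈ D, ∃ k, f^[k+1] w = w := by
      intro i j hlt he
      refine ⟨f^[i] w1, hit _ hw1D i, j - i - 1, ?_⟩
      rw [← Function.iterate_add_apply, show j - i - 1 + 1 + i = j by omega]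
      exact he.symm
    rcases lt_or_gt_of_ne hij with hlt | hlt
    · exact aux i j hlt he
    · exact aux j i hlt he.symm
  let U : V → Prop := fun x => ∃ d ∈ D, T.Anc d x
  have hfR : ∀ w ∈ D, RR G.A U (f w) w := by
    intro w hw
    obtain ⟨h1, _, x, hA, hx⟩ := hf w hw
    exact .tail ((anc_reach hroot hpp hx).mono fun y hy => ⟨_, h1, hy⟩) hA
      ⟨w, hw, .refl T w⟩
  have hfn : ∀ n, ∀ w ∈ D, RR G.A U (f^[n] w) w := by
    intro n w hw
    induction n with
    | zero => exact .refl ⟨w, hw, .refl T w⟩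
    | succ n ih =>
      rw [Function.iterate_succ_apply']
      exact (hfR _ (hit w hw n)).trans ih
  have hwf' : RR G.A U w (f w) := by
    have := hfn k (f w) (hf w hw).1
    rw [← Function.iterate_succ_apply, hk] at this
    exact this
  let S : Set V := {x | RR G.A U w x ∧ RR G.A U x w}
  have hww : RR G.A U w w := .refl ⟨w, hw, .refl T w⟩
  have hSwalk : ∀ x y, RR G.A U x y → RR G.A U w x → RR G.A U y w →
      RR G.A (fun z => z ∈ S) x y := by
    intro x y hxy hwx
    induction hxy with
    | refl _ => intro hyw; exact .refl ⟨hwx, hyw⟩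
    | @tail a b h1 h2 h3 ih =>
      intro hbw
      have hab : RR G.A U a b := .tail (.refl h1.last) h2 h3
      exact .tail (ih (hab.trans hbw)) h2 ⟨(hwx.trans h1).tail h2 h3, hbw⟩
  have hSC : StronglyConnectedSet G.A S := by
    refine ⟨⟨w, hww, hww⟩, fun u hu z hz => ?_⟩
    exact (hSwalk u z (hu.2.trans hz.1) hu.1 hz.2).walk
  obtain ⟨e, heS, he⟩ := hred S hSC
  obtain ⟨d, hdD, hde⟩ := heS.1.last
  have hall : ∀ u ∈ S, DomOn G.A G.s d u := fun u hu =>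
    dom_trans (anc_dom hroot hpp hde) (he u hu)
  obtain ⟨hfD, hfne, _⟩ := hf w hw
  by_cases hdw : d = w
  · exact hDD d hdD (f w) hfD (fun e => hfne (e.symm.trans hdw)) (hall _ ⟨hwf', hfR w hw⟩)
  · exact hDD d hdD w hw hdw (hall _ ⟨hww, hww⟩)

/-- Suppose `G` is reducible and `T` has the parent property. If every vertex
`v ≠ s` satisfies `(t(v), v) ∈ A` or has at least two distinct entering arcs in
the derived graph, then `T` has the sibling property, and hence is the
dominator tree of `G`. -/
theorem stmt15 [Fintype V] (G : FlowGraph V) (hred : Reducible G)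
    (T : ParentTree V) (hroot : T.root = G.s) (hpp : ParentProperty G T)
    (h : ∀ v : V, v ≠ G.s → G.A (T.parent v) v ∨
      ∃ a₁ a₂ : V, a₁ ≠ a₂ ∧ DerivedArc G T a₁ v ∧ DerivedArc G T a₂ v) :
    SiblingProperty G T ∧ IsDomTree G T := by
  have hs := sib_prop hred hroot hpp h
  exact ⟨hs, sib_domtree hroot hpp hs⟩
end

section
/- Let T be a rooted tree on the vertex set of a flow graph G that has the parent property. Then T has the sibling property — and hence T is the dominator tree of G — if and only if there exists a low-high order of T on G. In particular, the dominator tree of every flow graph admits a low-high order. -/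
variable {V : Type*}

/-- Vertices reachable from `E` along `R` staying within `W`. -/
inductive Rch (R : V → V → Prop) (E W : V → Prop) : V → Prop
  | base (e : V) : E e → W e → Rch R E W e
  | step (a b : V) : Rch R E W a → R a b → W b → Rch R E W b

theorem Rch.mem {R : V → V → Prop} {E W : V → Prop} {a : V} (h : Rch R E W a) : W a := by
  cases h <;> assumption

theorem Rch.mono {R : V → V → Prop} {E W W' : V → Prop} (hW : ∀ x, W x → W' x) {a : V}
    (h : Rch R E W a) : Rch R E W' a := by
  induction h with
  | base e he hw => exact .base e he (hW _ hw)
  | step a b _ hr hw ih => exact .step a b ih hr (hW _ hw)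

theorem Rch.switch {R : V → V → Prop} {E U : V → Prop} {x w : V}
    (hn : ¬ Rch R E (fun y => U y ∧ y ≠ x) w) {a : V}
    (h : Rch R E (fun y => U y ∧ y ≠ x) a) : Rch R E (fun y => U y ∧ y ≠ w) a := by
  induction h with
  | base e he hw =>
    exact .base e he ⟨hw.1, fun h => hn (h ▸ .base e he hw)⟩
  | step a b ha hr hw ih =>
    exact .step a b ih hr ⟨hw.1, fun h => hn (h ▸ .step a b ha hr hw)⟩

theorem Rch.antisymm_aux {R : V → V → Prop} {E U : V → Prop} {x w : V} (hxw : x ≠ w)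
    (hn : ¬ Rch R E (fun y => U y ∧ y ≠ x) w) (hw : Rch R E U w) :
    Rch R E (fun y => U y ∧ y ≠ w) x := by
  have key : ∀ z, Rch R E U z → Rch R E (fun y => U y ∧ y ≠ x) z ∨
      Rch R E (fun y => U y ∧ y ≠ w) x := by
    intro z hz
    induction hz with
    | base e he hu =>
      by_cases h : e = x
      · subst h; exact Or.inr (.base e he ⟨hu, hxw⟩)
      · exact Or.inl (.base e he ⟨hu, h⟩)
    | step a b _ hr hu ih =>
      rcases ih with ih | ih
      · by_cases h : b = x
        · subst h; exact Or.inr (.step a b (Rch.switch hn ih) hr ⟨hu, hxw⟩)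
        · exact Or.inl (.step a b ih hr ⟨hu, h⟩)
      · exact Or.inr ih
  rcases key w hw with h | h
  · exact absurd h hn
  · exact h

theorem Rch.of_list {R : V → V → Prop} {E W : V → Prop} (l : List V) : ∀ (a w : V),
    Rch R E W a → List.IsChain R (a :: l) → (∀ x ∈ l, W x) → (a :: l).getLast? = some w →
    Rch R E W w := by
  induction l with
  | nil => intro a w ha _ _ h; simp at h; exact h ▸ ha
  | cons b l ih =>
    intro a w ha hc hl h
    rw [List.isChain_cons_cons] at hc
    refine ih b w (.step a b ha hc.1 (hl b (by simp))) hc.2 (fun x hx => hl x (by simp [hx])) ?_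
    simpa [List.getLast?_cons_cons] using h

theorem rch_iff_walk {A : V → V → Prop} {s : V} {W : V → Prop} {w : V} :
    Rch A (fun y => y = s) W w ↔ ∃ p, IsWalk A s w p ∧ ∀ x ∈ p, W x := by
  constructor
  · intro h
    induction h with
    | base e he hw => subst he; exact ⟨[e], ⟨List.isChain_singleton e, rfl, rfl⟩, by simpa using hw⟩
    | step a b _ hr hw ih =>
      obtain ⟨p, ⟨h1, h2, h3⟩, h4⟩ := ih
      refine ⟨p ++ [b], ⟨?_, ?_, ?_⟩, ?_⟩
      · refine List.isChain_append.2 ⟨h1, by simp, ?_⟩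
        intro x hx y hy
        rw [h3] at hx
        simp at hx hy
        subst hx; subst hy; exact hr
      · simp [List.head?_append, h2]
      · simp
      · intro x hx
        rcases List.mem_append.1 hx with hx | hx
        · exact h4 x hx
        · simp at hx; exact hx ▸ hw
  · rintro ⟨p, ⟨h1, h2, h3⟩, h4⟩
    cases p with
    | nil => simp at h2
    | cons a l =>
      simp at h2
      exact Rch.of_list l a w (.base a h2 (h4 a (by simp))) h1 (fun x hx => h4 x (by simp [hx])) h3

theorem domOn_iff {A : V → V → Prop} {s v w : V} :
    DomOn A s v w ↔ ¬ Rch A (fun y => y = s) (fun y => True ∧ y ≠ v) w := by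
  rw [rch_iff_walk]
  constructor
  · rintro h ⟨p, hp, hn⟩
    exact (hn v (h p hp)).2 rfl
  · intro h p hp
    by_contra hv
    exact h ⟨p, hp, fun x hx => ⟨trivial, fun e => hv (e ▸ hx)⟩⟩

theorem FlowGraph.rch (G : FlowGraph V) (w : V) :
    Rch G.A (fun y => y = G.s) (fun _ => True) w := by
  obtain ⟨p, hp⟩ := G.reach w
  exact rch_iff_walk.2 ⟨p, hp, fun _ _ => trivial⟩

/-- The key step: a low-high order of a flat flow graph. -/
theorem flat_order [Fintype V] (R : V → V → Prop) (E : V → Prop) (hirr : ∀ a, ¬ R a a)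
    (hflat : ∀ v w, v ≠ w → Rch R E (fun y => y ≠ v) w) : ∀ (n : ℕ) (U : Finset V), U.card = n →
    (∀ w ∈ U, Rch R E (fun y => y ∈ U) w) →
    ∃ f : V → ℕ, Function.Injective f ∧ ∀ x ∈ U, ¬ E x →
      (∃ a, R a x ∧ (a ∉ U ∨ f a < f x)) ∧ (∃ c, c ∈ U ∧ R c x ∧ f x < f c) := by
  classical
  intro n
  induction n with
  | zero =>
    intro U hU _
    rw [Finset.card_eq_zero] at hU
    subst hU
    refine ⟨fun x => (Fintype.equivFin V x : ℕ), ?_, by simp⟩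
    intro x y h
    exact (Fintype.equivFin V).injective (Fin.ext h)
  | succ n ih =>
    intro U hU hreach
    let F : Finset V := U.filter (fun u => E u ∨ ∃ a, a ∉ U ∧ R a u)
    let N : V → Finset V := fun x => Finset.univ.filter (fun y => Rch R E (fun y => y ∈ U ∧ y ≠ x) y)
    have hF : F.Nonempty := by
      obtain ⟨w, hw⟩ : U.Nonempty := by rw [← Finset.card_pos]; omega
      have := hreach w hw
      clear hw
      induction this with
      | base e he hu => exact ⟨e, by simp [F]; exact ⟨hu, Or.inl he⟩⟩
      | step a b _ _ _ ih' => exact ih'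
    obtain ⟨x, hxF, hmax⟩ := Finset.exists_max_image F (fun x => (N x).card) hF
    have hxU : x ∈ U := (Finset.mem_filter.1 hxF).1
    have hFx : ∀ w ∈ F, w ≠ x → Rch R E (fun y => y ∈ U ∧ y ≠ x) w := by
      intro w hw hwx
      by_contra hn
      have hwU : w ∈ U := (Finset.mem_filter.1 hw).1
      have h1 : Rch R E (fun y => y ∈ U ∧ y ≠ w) x :=
        Rch.antisymm_aux (U := fun y => y ∈ U) hwx.symm hn (hreach w hwU)
      have h2 : N x ⊂ N w := by
        rw [Finset.ssubset_iff_of_subset]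
        · refine ⟨x, by simp [N]; exact h1, ?_⟩
          simp only [N, Finset.mem_filter, not_and]
          intro _ h
          exact h.mem.2 rfl
        · intro y hy
          simp only [N, Finset.mem_filter, Finset.mem_univ, true_and] at hy ⊢
          exact Rch.switch (U := fun y => y ∈ U) hn hy
      have := Finset.card_lt_card h2
      have := hmax w hw
      omega
    have hall : ∀ w, Rch R E (fun y => y ≠ x) w → w ∈ U → Rch R E (fun y => y ∈ U ∧ y ≠ x) w := by
      intro w hw
      induction hw with
      | base e he hne => intro hu; exact .base e he ⟨hu, hne⟩
      | step a b _ hr hne ih' =>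
        intro hu
        by_cases ha : a ∈ U
        · exact .step a b (ih' ha) hr ⟨hu, hne⟩
        · exact hFx b (Finset.mem_filter.2 ⟨hu, Or.inr ⟨a, ha, hr⟩⟩) hne
    obtain ⟨f, hfinj, hf⟩ := ih (U.erase x) (by rw [Finset.card_erase_of_mem hxU]; omega) (by
      intro w hw
      rw [Finset.mem_erase] at hw
      exact (hall w (hflat x w hw.1.symm) hw.2).mono (fun y hy => Finset.mem_erase.2 ⟨hy.2, hy.1⟩))
    refine ⟨fun y => if y = x then 0 else f y + 1, ?_, ?_⟩
    · intro y z h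
      simp only at h
      split_ifs at h with h1 h2 h2
      · rw [h1, h2]
      · exact hfinj (by omega)
    · intro y hy hE
      by_cases hyx : y = x
      · subst hyx
        constructor
        · rcases (Finset.mem_filter.1 hxF).2 with h | ⟨a, ha, hr⟩
          · exact absurd h hE
          · exact ⟨a, hr, Or.inl ha⟩
        · cases hreach y hy with
          | base _ he _ => exact absurd he hE
          | step a _ ha hr _ =>
            have : a ≠ y := fun h => hirr y (h ▸ hr)
            exact ⟨a, ha.mem, hr, by simp [this]⟩
      · obtain ⟨⟨a, hr, ha⟩, c, hc, hrc, hfc⟩ := hf y (Finset.mem_erase.2 ⟨hyx, hy⟩) hE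
        rw [Finset.mem_erase] at hc
        constructor
        · refine ⟨a, hr, ?_⟩
          by_cases hax : a = x
          · right; simp [hax, hyx]
          · rcases ha with ha | ha
            · left; intro h; exact ha (Finset.mem_erase.2 ⟨hax, h⟩)
            · right; simp [hax, hyx, ha]
        · exact ⟨c, hc.2, hrc, by simp [hc.1, hyx, hfc]⟩

/-! ### Trees -/

namespace ParentTree

theorem Anc.refl' (T : ParentTree V) (x : V) : T.Anc x x := ⟨0, rfl⟩

theorem Anc.trans' {T : ParentTree V} {x y z : V} (h : T.Anc x y) (h' : T.Anc y z) :
    T.Anc x z := by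
  obtain ⟨n, rfl⟩ := h
  obtain ⟨m, rfl⟩ := h'
  exact ⟨n + m, Function.iterate_add_apply _ _ _ _⟩

theorem Anc.eq_or {T : ParentTree V} {x y : V} (h : T.Anc x y) : x = y ∨ T.Anc x (T.parent y) := by
  obtain ⟨n, rfl⟩ := h
  cases n with
  | zero => left; rfl
  | succ n => right; exact ⟨n, rfl⟩

theorem anc_parent (T : ParentTree V) (x : V) : T.Anc (T.parent x) x := ⟨1, rfl⟩

theorem anc_root {T : ParentTree V} {x : V} (h : T.Anc x T.root) : x = T.root := by
  obtain ⟨n, rfl⟩ := h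
  exact Function.iterate_fixed T.parent_root n

open Classical in
/-- Depth of a vertex. -/
noncomputable def depth (T : ParentTree V) (x : V) : ℕ := Nat.find (T.reaches_root x)

theorem depth_root (T : ParentTree V) : T.depth T.root = 0 := by
  classical
  simp [depth]

theorem depth_succ (T : ParentTree V) {x : V} (hx : x ≠ T.root) :
    T.depth x = T.depth (T.parent x) + 1 := by
  classical
  unfold depth
  exact Nat.find_comp_succ (T.reaches_root x) (T.reaches_root (T.parent x)) hx

theorem ind (T : ParentTree V) {P : V → Prop} (h0 : P T.root)
    (h1 : ∀ x, x ≠ T.root → P (T.parent x) → P x) (x : V) : P x := by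
  induction h : T.depth x generalizing x with
  | zero =>
    by_cases hx : x = T.root
    · exact hx ▸ h0
    · rw [T.depth_succ hx] at h; omega
  | succ n ih =>
    by_cases hx : x = T.root
    · exact hx ▸ h0
    · rw [T.depth_succ hx] at h
      exact h1 x hx (ih _ (by omega))

theorem parent_ne (T : ParentTree V) {x : V} (hx : x ≠ T.root) : T.parent x ≠ x := by
  intro h
  have := T.depth_succ hx
  rw [h] at this
  omega

theorem anc_depth (T : ParentTree V) {x y : V} (h : T.Anc x y) : x = y ∨ T.depth x < T.depth y := by
  induction y using T.ind with
  | h0 => left; exact anc_root h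
  | h1 y hy ih =>
    rcases h.eq_or with h | h
    · left; exact h
    · right
      rw [T.depth_succ hy]
      rcases ih h with h | h
      · rw [h]; omega
      · omega

theorem anc_antisymm (T : ParentTree V) {x y : V} (h : T.Anc x y) (h' : T.Anc y x) : x = y := by
  rcases T.anc_depth h with h1 | h1
  · exact h1
  · rcases T.anc_depth h' with h2 | h2
    · exact h2.symm
    · omega

/-- If `p` is a proper ancestor of `z`, some child of `p` is an ancestor of `z`. -/
theorem anc_child (T : ParentTree V) {p z : V} (h : T.Anc p z) (hne : p ≠ z) :
    ∃ c, c ≠ T.root ∧ T.parent c = p ∧ T.Anc c z := by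
  induction z using T.ind with
  | h0 => exact absurd (anc_root h) hne
  | h1 y hy ih =>
    rcases h.eq_or with h | h
    · exact absurd h hne
    · by_cases hp : p = T.parent y
      · exact ⟨y, hy, hp.symm, Anc.refl' T y⟩
      · obtain ⟨c, h1, h2, h3⟩ := ih h hp
        exact ⟨c, h1, h2, h3.trans' (T.anc_parent y)⟩

/-- Two ancestors of a vertex with the same (nonroot) depth agree; sibling version. -/
theorem anc_sibling (T : ParentTree V) {a b z : V} (ha : a ≠ T.root) (hb : b ≠ T.root)
    (hab : T.parent a = T.parent b) (h : T.Anc a z) (h' : T.Anc b z) : a = b := by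
  have hd : T.depth a = T.depth b := by rw [T.depth_succ ha, T.depth_succ hb, hab]
  induction z using T.ind with
  | h0 => exact absurd (anc_root h) ha
  | h1 y hy ih =>
    rcases h.eq_or with e | h1
    · rcases T.anc_depth (e ▸ h' : T.Anc b a) with e' | e'
      · exact e'.symm
      · omega
    · rcases h'.eq_or with e | h2
      · rcases T.anc_depth (e ▸ h : T.Anc a b) with e' | e'
        · exact e'
        · omega
      · exact ih h1 h2

/-- The list of `f`-values on the tree path to `x`. -/
noncomputable def key (T : ParentTree V) (f : V → ℕ) (x : V) : List ℕ :=
  ((List.range (T.depth x)).map (fun i => f (T.parent^[i] x))).reverse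

theorem key_root (T : ParentTree V) (f : V → ℕ) : T.key f T.root = [] := by
  simp [key, depth_root]

theorem key_succ (T : ParentTree V) (f : V → ℕ) {x : V} (hx : x ≠ T.root) :
    T.key f x = T.key f (T.parent x) ++ [f x] := by
  simp [key, T.depth_succ hx, List.range_succ_eq_map, Function.comp_def]

theorem key_inj (T : ParentTree V) {f : V → ℕ} (hf : Function.Injective f) :
    Function.Injective (T.key f) := by
  intro x y h
  by_cases hx : x = T.root <;> by_cases hy : y = T.root
  · rw [hx, hy]
  · rw [hx, key_root, T.key_succ f hy] at h; simp at h
  · rw [hy, key_root, T.key_succ f hx] at h; simp at h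
  · rw [T.key_succ f hx, T.key_succ f hy] at h
    have := (List.append_inj' h rfl).2
    simp at this
    exact hf this

theorem anc_iff_prefix (T : ParentTree V) {f : V → ℕ} (hf : Function.Injective f) {v x : V} :
    T.Anc v x ↔ T.key f v <+: T.key f x := by
  induction x using T.ind with
  | h0 =>
    constructor
    · intro h; rw [anc_root h]
    · intro h
      rw [key_root, List.prefix_nil, ← T.key_root f] at h
      rw [T.key_inj hf h]; exact Anc.refl' T _
  | h1 y hy ih =>
    rw [T.key_succ f hy, List.prefix_concat_iff, ← T.key_succ f hy, ← ih]
    constructor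
    · intro h
      rcases h.eq_or with h | h
      · left; rw [h]
      · right; exact h
    · rintro (h | h)
      · rw [T.key_inj hf h]; exact Anc.refl' T _
      · exact h.trans' (T.anc_parent y)

end ParentTree

theorem list_prefix_not_lt (p t : List ℕ) : ¬ p ++ t < p := by
  induction p with
  | nil => simp
  | cons a p ih =>
    rw [List.cons_append, List.cons_lt_cons_iff]
    rintro (h | ⟨_, h⟩)
    · omega
    · exact ih h

theorem list_prefix_le {p l : List ℕ} (h : p <+: l) : p ≤ l := by
  obtain ⟨t, rfl⟩ := h
  exact not_lt.1 (list_prefix_not_lt p t)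

theorem list_prefix_convex (p : List ℕ) : ∀ {x y z : List ℕ}, p <+: x → p <+: z → ¬ y < x →
    ¬ z < y → p <+: y := by
  induction p with
  | nil => intros; simp
  | cons a p ih =>
    rintro x y z ⟨t, rfl⟩ ⟨r, rfl⟩ h1 h2
    cases y with
    | nil => exact absurd (by simp) h1
    | cons b y =>
      rw [List.cons_append, List.cons_lt_cons_iff, not_or] at h1 h2
      have hab : a = b := by omega
      subst hab
      rw [List.cons_prefix_cons]
      exact ⟨rfl, ih ⟨t, rfl⟩ ⟨r, rfl⟩ (fun h => h1.2 ⟨rfl, h⟩) (fun h => h2.2 ⟨rfl, h⟩)⟩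

theorem list_lt_of_branch (p : List ℕ) {a b : ℕ} (h : a < b) (t r : List ℕ) :
    p ++ [a] ++ t < p ++ [b] ++ r := by
  induction p with
  | nil => simp [List.cons_lt_cons_iff, h]
  | cons c p ih => simpa [List.cons_lt_cons_iff] using ih

theorem exists_preorder [Fintype V] (T : ParentTree V) {f : V → ℕ} (hf : Function.Injective f) :
    ∃ ord : V → ℕ, IsTreePreorder T ord ∧ ∀ a b x y, a ≠ T.root → b ≠ T.root →
      T.parent a = T.parent b → f a < f b → T.Anc a x → T.Anc b y → ord x < ord y := by
  classical
  let ord : V → ℕ := fun x => (Finset.univ.filter (fun y => T.key f y < T.key f x)).card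
  have hmono : ∀ x y, T.key f x < T.key f y → ord x < ord y := by
    intro x y h
    apply Finset.card_lt_card
    rw [Finset.ssubset_iff_of_subset]
    · exact ⟨x, by simpa using h, by simp⟩
    · intro z hz
      simp only [Finset.mem_filter, Finset.mem_univ, true_and] at hz ⊢
      exact lt_trans hz h
  have hle : ∀ x y, ord x ≤ ord y → T.key f x ≤ T.key f y := by
    intro x y h
    by_contra hn
    have := hmono y x (not_le.1 hn)
    omega
  have hle' : ∀ x y, T.key f x ≤ T.key f y → ord x ≤ ord y := by
    intro x y h
    rcases h.lt_or_eq with h | h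
    · exact (hmono x y h).le
    · rw [T.key_inj hf h]
  refine ⟨ord, ⟨?_, ?_, ?_⟩, ?_⟩
  · intro x y h
    exact T.key_inj hf (le_antisymm (hle x y h.le) (hle y x h.ge))
  · intro v x h
    exact hle' v x (list_prefix_le ((T.anc_iff_prefix hf).1 h))
  · intro v x y z h1 h2 h3 h4
    rw [T.anc_iff_prefix hf] at h1 h2 ⊢
    exact list_prefix_convex _ h1 h2 (not_lt.2 (hle _ _ h3)) (not_lt.2 (hle _ _ h4))
  · intro a b x y ha hb hab hfab hx hy
    rw [T.anc_iff_prefix hf] at hx hy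
    obtain ⟨t, ht⟩ := hx
    obtain ⟨r, hr⟩ := hy
    apply hmono
    rw [← ht, ← hr, T.key_succ f ha, T.key_succ f hb, hab]
    exact list_lt_of_branch _ hfab t r

/-! ### The derived sibling relation -/

/-- Sibling arcs derived from the arcs of `G`. -/
def SibArc (G : FlowGraph V) (T : ParentTree V) (a b : V) : Prop :=
  a ≠ b ∧ a ≠ T.root ∧ b ≠ T.root ∧ T.parent a = T.parent b ∧ ∃ v, G.A v b ∧ T.Anc a v

/-- Vertices that need no two sibling arcs. -/
def SibE (G : FlowGraph V) (T : ParentTree V) (b : V) : Prop :=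
  b = T.root ∨ G.A (T.parent b) b

theorem sib_reach (G : FlowGraph V) (T : ParentTree V) (hroot : T.root = G.s)
    (hpp : ParentProperty G T) (p : V) (K : V → Prop)
    (hK : ∀ k, K k → k ≠ T.root ∧ T.parent k = p) (z : V)
    (hz : Rch G.A (fun y => y = G.s) (fun y => ¬ K y) z) :
    (∀ k, K k → ¬ T.Anc k z) ∧
    ∀ c, T.Anc c z → c ≠ T.root → T.parent c = p →
      Rch (SibArc G T) (SibE G T) (fun y => ¬ K y) c := by
  induction hz with
  | base e he _ =>
    rw [← hroot] at he
    subst he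
    exact ⟨fun k hk h => (hK k hk).1 (ParentTree.anc_root h),
      fun c hc hne _ => absurd (ParentTree.anc_root hc) hne⟩
  | step z z' _ hr hnK ih =>
    obtain ⟨ih1, ih2⟩ := ih
    have hpar := hpp z z' hr
    constructor
    · intro k hk h
      rcases h.eq_or with h | h
      · exact hnK (h ▸ hk)
      · exact ih1 k hk (h.trans' hpar)
    · intro c hc hcr hcp
      rcases hc.eq_or with h | h
      · subst h
        by_cases hzp : T.parent c = z
        · exact .base c (Or.inr (hzp ▸ hr)) hnK
        · obtain ⟨c', h1, h2, h3⟩ := T.anc_child hpar hzp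
          by_cases hcc : c' = c
          · subst hcc
            exact ih2 c' h3 h1 hcp
          · exact .step c' c (ih2 c' h3 h1 (h2.trans hcp))
              ⟨hcc, h1, hcr, h2, z, hr, h3⟩ hnK
      · exact ih2 c (h.trans' hpar) hcr hcp

theorem sib_flat (G : FlowGraph V) (T : ParentTree V) (hroot : T.root = G.s)
    (hpp : ParentProperty G T) (hsp : SiblingProperty G T) (v w : V) (hvw : v ≠ w) :
    Rch (SibArc G T) (SibE G T) (fun y => y ≠ v) w := by
  by_cases hw : w = T.root
  · exact .base w (Or.inl hw) hvw.symm
  by_cases hs : v ≠ T.root ∧ T.parent v = T.parent w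
  · have h := hsp v w hs.1 hw hvw hs.2
    rw [domOn_iff, not_not] at h
    exact (sib_reach G T hroot hpp (T.parent w) (fun y => y = v)
      (fun k hk => hk ▸ hs) w (h.mono (fun x hx => hx.2))).2 w (ParentTree.Anc.refl' T w) hw rfl
  · have h := (sib_reach G T hroot hpp (T.parent w) (fun _ => False)
      (fun k hk => hk.elim) w ((G.rch w).mono (fun _ _ h => h))).2 w (ParentTree.Anc.refl' T w) hw rfl
    induction h with
    | base e he _ => exact .base e he hvw.symm
    | step a b _ hr _ ih =>
      obtain ⟨h1, h2, h3, h4, _⟩ := id hr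
      refine .step a b (ih ?_ h2 ?_) hr hvw.symm
      · rintro rfl; exact hs ⟨h2, h4⟩
      · rw [h4]; exact hs

theorem lowhigh_of_sibling [Fintype V] (G : FlowGraph V) (T : ParentTree V) (hroot : T.root = G.s)
    (hpp : ParentProperty G T) (hsp : SiblingProperty G T) : ∃ ord : V → ℕ, LowHigh G T ord := by
  have hflat := sib_flat G T hroot hpp hsp
  obtain ⟨f, hfinj, hf⟩ := flat_order (SibArc G T) (SibE G T) (fun a h => h.1 rfl) hflat _
    Finset.univ rfl (by
      intro w _
      by_cases hw : w = T.root
      · exact .base w (Or.inl hw) (by simp)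
      · exact (hflat T.root w (Ne.symm hw)).mono (by simp))
  obtain ⟨ord, hpre, hord⟩ := exists_preorder T hfinj
  refine ⟨ord, hpre, ?_⟩
  intro v hv
  by_cases hA : G.A (T.parent v) v
  · exact Or.inl hA
  right
  have hvr : v ≠ T.root := hroot ▸ hv
  obtain ⟨⟨a, ha, hfa⟩, c, _, hc, hfc⟩ := hf v (Finset.mem_univ v) (by
    rintro (h | h)
    · exact hvr h
    · exact hA h)
  simp at hfa
  obtain ⟨_, ha1, _, ha2, u, hu, hau⟩ := ha
  obtain ⟨hcv, hc1, _, hc2, w, hw, hcw⟩ := hc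
  refine ⟨u, w, hu, hw, hord a v u v ha1 hvr ha2 hfa hau (.refl' T v),
    hord v c v w hvr hc1 hc2.symm hfc (.refl' T v) hcw, ?_⟩
  intro h
  exact hcv (T.anc_sibling hc1 hvr hc2 hcw h)

theorem sibling_of_lowhigh [Fintype V] (G : FlowGraph V) (T : ParentTree V) (hroot : T.root = G.s)
    (ord : V → ℕ) (h : LowHigh G T ord) : SiblingProperty G T := by
  classical
  obtain ⟨⟨hinj, hanc, hconv⟩, hlh⟩ := h
  intro v w hv hw hvw hpar
  rw [domOn_iff, not_not]
  have hlow : ∀ (n : ℕ) (x : V), ord x = n → ord x < ord v →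
      Rch G.A (fun y => y = G.s) (fun y => True ∧ y ≠ v) x := by
    intro n
    induction n using Nat.strong_induction_on with
    | _ n ih =>
      intro x hx hxv
      have hne : x ≠ v := by rintro rfl; omega
      by_cases hs : x = G.s
      · exact .base x hs ⟨trivial, hne⟩
      · rcases hlh x hs with hA | ⟨u, _, hA, _, hu, _⟩
        · have h1 := hanc _ _ (T.anc_parent x)
          have h2 : ord (T.parent x) ≠ ord x :=
            fun h => T.parent_ne (hroot ▸ hs) (hinj h)
          exact .step _ x (ih _ (by omega) _ rfl (by omega)) hA ⟨trivial, hne⟩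
        · exact .step _ x (ih _ (by omega) _ rfl (by omega)) hA ⟨trivial, hne⟩
  let g : V → Finset V := fun x =>
    Finset.univ.filter (fun z => (ord x < ord z ∧ ¬ T.Anc x z) ∨ T.Anc z x)
  have hall : ∀ (n : ℕ) (x : V), (g x).card = n → ¬ T.Anc v x →
      Rch G.A (fun y => y = G.s) (fun y => True ∧ y ≠ v) x := by
    intro n
    induction n using Nat.strong_induction_on with
    | _ n ih =>
      intro x hx hxv
      have hne : x ≠ v := by rintro rfl; exact hxv (.refl' T x)
      by_cases hs : x = G.s
      · exact .base x hs ⟨trivial, hne⟩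
      have hxr : x ≠ T.root := hroot ▸ hs
      by_cases hlt : ord x < ord v
      · exact hlow _ x rfl hlt
      have hlt' : ord v < ord x := by
        have : ord x ≠ ord v := fun h => hne (hinj h)
        omega
      rcases hlh x hs with hA | ⟨_, y, _, hA, _, hy, hny⟩
      · refine .step _ x (ih _ ?_ _ rfl (fun h => hxv (h.trans' (T.anc_parent x)))) hA ⟨trivial, hne⟩
        rw [← hx]
        apply Finset.card_lt_card
        rw [Finset.ssubset_iff_of_subset]
        · refine ⟨x, by simp [g, ParentTree.Anc.refl' T x], ?_⟩
          simp only [g, Finset.mem_filter, Finset.mem_univ, true_and]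
          rintro (⟨_, h⟩ | h)
          · exact h (T.anc_parent x)
          · exact T.parent_ne hxr (T.anc_antisymm (T.anc_parent x) h)
        · intro z
          simp only [g, Finset.mem_filter, Finset.mem_univ, true_and]
          rintro (⟨h1, h2⟩ | h)
          · left
            refine ⟨?_, fun h => h2 ((T.anc_parent x).trans' h)⟩
            by_contra hzx
            exact h2 (hconv _ _ z x (.refl' T _) (T.anc_parent x) h1.le (by omega))
          · right; exact h.trans' (T.anc_parent x)
      · refine .step _ x (ih _ ?_ y rfl
          (fun h => hxv (hconv v v x y (.refl' T v) h hlt'.le hy.le))) hA ⟨trivial, hne⟩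
        rw [← hx]
        apply Finset.card_lt_card
        rw [Finset.ssubset_iff_of_subset]
        · refine ⟨x, by simp [g, ParentTree.Anc.refl' T x], ?_⟩
          simp only [g, Finset.mem_filter, Finset.mem_univ, true_and]
          rintro (⟨h, _⟩ | h)
          · omega
          · exact hny h
        · intro z
          simp only [g, Finset.mem_filter, Finset.mem_univ, true_and]
          rintro (⟨h1, h2⟩ | h)
          · left
            exact ⟨by omega, fun h => hny (hconv x x y z (.refl' T x) h hy.le h1.le)⟩
          · by_cases hzx : ord x < ord z
            · left; exact ⟨hzx, fun h' => hny (h'.trans' h)⟩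
            · right
              exact hconv z z x y (.refl' T z) h (by omega) hy.le
  refine hall _ w rfl ?_
  intro h
  exact hvw (T.anc_sibling hv hw hpar h (.refl' T w))

theorem dom_antisymm_s16 (G : FlowGraph V) {u v : V} (h1 : DomOn G.A G.s u v)
    (h2 : DomOn G.A G.s v u) : u = v := by
  by_contra hne
  rw [domOn_iff] at h1 h2
  exact h2 (Rch.antisymm_aux (U := fun _ => True) hne h1 (G.rch v))

theorem domTree_props (G : FlowGraph V) (D : ParentTree V) (h : IsDomTree G D) :
    ParentProperty G D ∧ SiblingProperty G D := by
  obtain ⟨hroot, hd⟩ := h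
  constructor
  · intro v w hA
    have hw : w ≠ G.s := by rintro rfl; exact G.no_enter v hA
    obtain ⟨h1, h2, _⟩ := hd w hw
    have hdom : DomOn G.A G.s (D.parent w) v := by
      rw [domOn_iff] at h1 ⊢
      intro h
      exact h1 (.step v w h hA ⟨trivial, h2.symm⟩)
    have key : ∀ x u, DomOn G.A G.s u x → D.Anc u x := by
      intro x
      induction x using D.ind with
      | h0 =>
        intro u hu
        rw [hroot] at hu ⊢
        have := hu [G.s] ⟨List.isChain_singleton _, rfl, rfl⟩
        simp at this
        exact this ▸ .refl' D _
      | h1 x hx ih =>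
        intro u hu
        by_cases hux : u = x
        · exact hux ▸ .refl' D _
        · exact (ih u ((hd x (hroot ▸ hx)).2.2 u hu hux)).trans' (D.anc_parent x)
    exact key v _ hdom
  · intro v w hv hw hvw hpar hdom
    have h1 := (hd w (hroot ▸ hw)).2.2 v hdom hvw
    obtain ⟨h2, h3, _⟩ := hd v (hroot ▸ hv)
    rw [← hpar] at h1
    exact h3 (dom_antisymm_s16 G h2 h1)

/-- A rooted tree with the parent property has the sibling property — and
hence is the dominator tree of `G` — if and only if it has a low-high order on
`G`. In particular the dominator tree of every flow graph admits a low-high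
order. -/
theorem stmt16 [Fintype V] (G : FlowGraph V) :
    (∀ T : ParentTree V, T.root = G.s → ParentProperty G T →
      (SiblingProperty G T ↔ ∃ ord : V → ℕ, LowHigh G T ord)) ∧
    (∀ D : ParentTree V, IsDomTree G D → ∃ ord : V → ℕ, LowHigh G D ord) := by
  refine ⟨fun T hroot hpp => ⟨lowhigh_of_sibling G T hroot hpp, ?_⟩, fun D hD => ?_⟩
  · rintro ⟨ord, h⟩
    exact sibling_of_lowhigh G T hroot ord h
  · exact lowhigh_of_sibling G D hD.1 (domTree_props G D hD).1 (domTree_props G D hD).2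
end
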